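/- (Convergence of the attitude under summable reference variation.) Let (R(t), ω(t), R_g(t)) solve the rigid-body closed-loop system on [0, ∞) with R_g differentiable, and suppose: (a) sup_t ‖Ṙ_g(t)‖ ≤ M < ∞ and ∫₀^∞ ‖Ṙ_g(t)‖ dt < ∞; (b) R_g(t) → R_d ∈ SO(3) as t → ∞; and (c) there exists ε ∈ (0, 2) with φ(R(t)ᵀR_g(t)) ≤ 2 − ε for all t ≥ 0. Then R(t) → R_d and ω(t) → 0 as t → ∞. -/

import Mathlib

noncomputable section
open Matrix Filter MeasureTheory

abbrev M3 : Type := Matrix (Fin 3) (Fin 3) ℝ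
abbrev V3 : Type := Fin 3 → ℝ

/-- `SO(3)`: real 3×3 matrices with `RᵀR = I` and `det R = 1`. -/
def SO3 (R : M3) : Prop := Rᵀ * R = 1 ∧ R.det = 1

/-- Attitude error function `φ(R) = (1/2)·tr(I₃ − R)`. -/
def phi (R : M3) : ℝ := (1 / 2) * ((1 : M3) - R).trace

/-- Skew-symmetric projection `sk(A) = (A − Aᵀ)/2`. -/
def sk (A : M3) : M3 := (1 / 2 : ℝ) • (A - Aᵀ)

/-- Hat map: `x̂ y = x × y`. -/
def hat (x : V3) : M3 := !![0, -x 2, x 1; x 2, 0, -x 0; -x 1, x 0, 0]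

/-- Vee map: the vector associated with a skew-symmetric matrix. -/
def vee (S : M3) : V3 := ![S 2 1, S 0 2, S 1 0]

/-- Frobenius norm of a 3×3 real matrix. -/
def fnorm (A : M3) : ℝ := Real.sqrt (∑ i, ∑ j, (A i j) ^ 2)

/-- PD control law `τ = k_p·sk(RᵀR_g)∨ − k_d·ω`. -/
def tauPD (kp kd : ℝ) (R Rg : M3) (ω : V3) : V3 :=
  kp • vee (sk (Rᵀ * Rg)) - kd • ω

/-- Sum of squares of the entries. -/
def fsq (A : M3) : ℝ := ∑ i, ∑ j, (A i j) ^ 2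

lemma fsq_eq_trace (A : M3) : fsq A = (Aᵀ * A).trace := by
  simp only [fsq, Matrix.trace, Matrix.mul_apply, Matrix.diag, Fin.sum_univ_three,
    Matrix.transpose_apply]
  ring

lemma SO3.mul_transpose {R : M3} (h : SO3 R) : R * Rᵀ = 1 :=
  mul_eq_one_comm.mp h.1

lemma fsq_transpose_mul {R : M3} (h : SO3 R) (A : M3) : fsq (Rᵀ * A) = fsq A := by
  rw [fsq_eq_trace, fsq_eq_trace, Matrix.transpose_mul, Matrix.transpose_transpose,
    Matrix.mul_assoc, ← Matrix.mul_assoc R, h.mul_transpose, Matrix.one_mul]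

lemma fsq_mul {R : M3} (h : SO3 R) (A : M3) : fsq (A * R) = fsq A := by
  rw [fsq_eq_trace, fsq_eq_trace, Matrix.transpose_mul, Matrix.mul_assoc, Matrix.trace_mul_comm,
    Matrix.mul_assoc, Matrix.mul_assoc, h.mul_transpose, Matrix.mul_one]

lemma SO3.err {R S : M3} (hR : SO3 R) (hS : SO3 S) : SO3 (Rᵀ * S) := by
  refine ⟨?_, ?_⟩
  · rw [Matrix.transpose_mul, Matrix.transpose_transpose,
      Matrix.mul_assoc, ← Matrix.mul_assoc R, hR.mul_transpose, Matrix.one_mul, hS.1]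
  · rw [Matrix.det_mul, Matrix.det_transpose, hR.2, hS.2, one_mul]

lemma fnorm_sq (A : M3) : fnorm A ^ 2 = fsq A := by
  unfold fnorm fsq
  exact Real.sq_sqrt (by positivity)

lemma fnorm_nonneg (A : M3) : 0 ≤ fnorm A := Real.sqrt_nonneg _

/-- `|sk(E)∨|² = φ(2-φ)` on `SO(3)`. -/
lemma vee_sk_sq {E : M3} (h : SO3 E) :
    vee (sk E) ⬝ᵥ vee (sk E) = phi E * (2 - phi E) := by
  have hadj : E.adjugate = Eᵀ := by
    calc E.adjugate = E.adjugate * (E * Eᵀ) := by rw [h.mul_transpose, Matrix.mul_one]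
      _ = Eᵀ := by rw [← Matrix.mul_assoc, Matrix.adjugate_mul, h.2, one_smul, Matrix.one_mul]
  have h3 : fsq E = 3 := by
    rw [fsq_eq_trace, h.1]; simp
  have hc := fun i => congrFun (congrFun hadj i) i
  have h0 := hc 0
  have h1 := hc 1
  have h2 := hc 2
  rw [Matrix.adjugate_fin_three] at h0 h1 h2
  simp [Fin.sum_univ_three, fsq] at h0 h1 h2 h3
  simp [vee, sk, phi, dotProduct, Fin.sum_univ_three, Matrix.trace]
  linear_combination (1/4) * h3 + (1/2) * h0 + (1/2) * h1 + (1/2) * h2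

lemma vee_sk_bound (A : M3) : vee (sk A) ⬝ᵥ vee (sk A) ≤ fsq A / 2 := by
  simp [vee, sk, fsq, dotProduct, Fin.sum_univ_three]
  nlinarith [sq_nonneg (A 2 1 + A 1 2), sq_nonneg (A 0 2 + A 2 0), sq_nonneg (A 1 0 + A 0 1),
    sq_nonneg (A 0 0), sq_nonneg (A 1 1), sq_nonneg (A 2 2)]

lemma vee_sk_add (A B : M3) : vee (sk (A + B)) = vee (sk A) + vee (sk B) := by
  ext i; fin_cases i <;> simp [vee, sk] <;> ring

lemma trace_bound (A : M3) : |A.trace| ≤ 2 * fnorm A := by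
  apply abs_le_of_sq_le_sq _ (by have := fnorm_nonneg A; positivity)
  rw [mul_pow, fnorm_sq]
  simp [fsq, Matrix.trace, Fin.sum_univ_three]
  nlinarith [sq_nonneg (A 0 0 - A 1 1), sq_nonneg (A 0 0 - A 2 2), sq_nonneg (A 1 1 - A 2 2),
    sq_nonneg (A 2 1), sq_nonneg (A 1 2), sq_nonneg (A 0 1), sq_nonneg (A 1 0), sq_nonneg (A 0 2),
    sq_nonneg (A 2 0), sq_nonneg (A 0 0), sq_nonneg (A 1 1), sq_nonneg (A 2 2)]

lemma fsq_hat (x : V3) : fsq (hat x) = 2 * (x ⬝ᵥ x) := by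
  simp [fsq, hat, dotProduct, Fin.sum_univ_three]; ring

lemma fsq_neg (A : M3) : fsq (-A) = fsq A := by simp [fsq]

lemma hat_transpose (x : V3) : (hat x)ᵀ = - hat x := by
  ext i j; fin_cases i <;> fin_cases j <;> simp [hat]

/-- derivative of the attitude error matrix -/
def dE (R Rg Rg' : M3) (w : V3) : M3 := (R * hat w)ᵀ * Rg + Rᵀ * Rg'

lemma dE_eq (R Rg Rg' : M3) (w : V3) :
    dE R Rg Rg' w = -hat w * (Rᵀ * Rg) + Rᵀ * Rg' := by
  rw [dE, Matrix.transpose_mul, hat_transpose, Matrix.mul_assoc]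

lemma dot_add_sq (a b : V3) : (a + b) ⬝ᵥ (a + b) ≤ 2 * (a ⬝ᵥ a) + 2 * (b ⬝ᵥ b) := by
  simp [dotProduct, Fin.sum_univ_three]
  nlinarith [sq_nonneg (a 0 - b 0), sq_nonneg (a 1 - b 1), sq_nonneg (a 2 - b 2)]

lemma dot_self_nonneg (a : V3) : 0 ≤ a ⬝ᵥ a := by
  simp [dotProduct, Fin.sum_univ_three]; nlinarith [sq_nonneg (a 0), sq_nonneg (a 1), sq_nonneg (a 2)]

/-- weighted AM-GM -/
lemma dot_le (a b : V3) (s : ℝ) (hs : 0 < s) :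
    |a ⬝ᵥ b| ≤ s / 2 * (a ⬝ᵥ a) + 1 / (2 * s) * (b ⬝ᵥ b) := by
  have h1 := dot_self_nonneg (s • a - b)
  have h2 := dot_self_nonneg (s • a + b)
  have e : s / 2 * (a ⬝ᵥ a) + 1 / (2 * s) * (b ⬝ᵥ b)
      = (s ^ 2 * (a ⬝ᵥ a) + b ⬝ᵥ b) / (2 * s) := by field_simp
  rw [e, le_div_iff₀ (by positivity)]
  simp [dotProduct, Fin.sum_univ_three] at h1 h2 ⊢
  rcases abs_cases (a 0 * b 0 + a 1 * b 1 + a 2 * b 2) with ⟨h, _⟩ | ⟨h, _⟩ <;> rw [h] <;> nlinarith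

lemma vee_dE_bound {R Rg Rg' : M3} {w : V3} (hR : SO3 R) (hRg : SO3 Rg) :
    vee (sk (dE R Rg Rg' w)) ⬝ᵥ vee (sk (dE R Rg Rg' w)) ≤ 2 * (w ⬝ᵥ w) + fnorm Rg' ^ 2 := by
  rw [dE_eq, vee_sk_add]
  have h1 := vee_sk_bound (-hat w * (Rᵀ * Rg))
  have h2 := vee_sk_bound (Rᵀ * Rg')
  rw [fsq_mul (hR.err hRg), fsq_neg, fsq_hat] at h1
  rw [fsq_transpose_mul hR] at h2
  rw [fnorm_sq]
  linarith [dot_add_sq (vee (sk (-hat w * (Rᵀ * Rg)))) (vee (sk (Rᵀ * Rg')))]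

lemma trace_hat (w : V3) (E : M3) : (-hat w * E).trace = 2 * (w ⬝ᵥ vee (sk E)) := by
  simp only [Matrix.trace, Matrix.mul_apply, Matrix.diag, Matrix.neg_apply, Fin.sum_univ_three,
    dotProduct]
  simp [hat, vee, sk]; ring

lemma mulVec_bound (J : M3) (x : V3) : (J *ᵥ x) ⬝ᵥ (J *ᵥ x) ≤ (fsq J + 1) * (x ⬝ᵥ x) := by
  have key : ∀ a b c x y z : ℝ, (a*x+b*y+c*z)^2 ≤ (a^2+b^2+c^2)*(x^2+y^2+z^2) := by
    intro a b c x y z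
    nlinarith [sq_nonneg (a*y-b*x), sq_nonneg (a*z-c*x), sq_nonneg (b*z-c*y)]
  have h := fun i => key (J i 0) (J i 1) (J i 2) (x 0) (x 1) (x 2)
  simp [fsq, dotProduct, Matrix.mulVec, Fin.sum_univ_three]
  nlinarith [h 0, h 1, h 2, sq_nonneg (x 0), sq_nonneg (x 1), sq_nonneg (x 2)]

lemma cross_bound (a b : V3) : crossProduct a b ⬝ᵥ crossProduct a b ≤ (a ⬝ᵥ a) * (b ⬝ᵥ b) := by
  simp [crossProduct, dotProduct, Fin.sum_univ_three]
  nlinarith [sq_nonneg (a 0 * b 0 + a 1 * b 1 + a 2 * b 2)]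

lemma triple (e a b : V3) : e ⬝ᵥ crossProduct a b = a ⬝ᵥ crossProduct b e := by
  simp [crossProduct, dotProduct, Fin.sum_univ_three]; ring

lemma triple_zero (a b : V3) : b ⬝ᵥ crossProduct a b = 0 := by
  simp [crossProduct, dotProduct, Fin.sum_univ_three]; ring

lemma posDef_lower {J : M3} (hJ : J.PosDef) :
    ∃ m : ℝ, 0 < m ∧ ∀ x : V3, m * (x ⬝ᵥ x) ≤ x ⬝ᵥ (J *ᵥ x) := by
  have hcomp : IsCompact (Metric.sphere (0 : V3) 1) := isCompact_sphere 0 1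
  have hne : (Metric.sphere (0 : V3) 1).Nonempty := ⟨fun _ => 1, by simp [pi_norm_const]⟩
  have hcont : Continuous fun x : V3 => x ⬝ᵥ (J *ᵥ x) := by fun_prop
  obtain ⟨y, hy, hmin⟩ := hcomp.exists_isMinOn hne hcont.continuousOn
  have hy0 : y ≠ 0 := by rintro rfl; simp at hy
  have hpos : 0 < y ⬝ᵥ (J *ᵥ y) := by simpa using hJ.dotProduct_mulVec_pos hy0
  refine ⟨(y ⬝ᵥ (J *ᵥ y)) / 3, by positivity, fun x => ?_⟩
  by_cases hx : x = 0
  · simp [hx]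
  have hn : 0 < ‖x‖ := norm_pos_iff.mpr hx
  have h1 := hmin (show ‖x‖⁻¹ • x ∈ Metric.sphere (0 : V3) 1 by
    simp [norm_smul, hn.ne'])
  simp only [Set.mem_ofPred_eq, Matrix.mulVec_smul, dotProduct_smul, smul_dotProduct,
    smul_eq_mul] at h1
  have h2 : x ⬝ᵥ x ≤ 3 * ‖x‖ ^ 2 := by
    have h := fun i => norm_le_pi_norm x i
    have h' : ∀ i, x i * x i ≤ ‖x‖ ^ 2 := fun i => by
      have := h i
      rw [Real.norm_eq_abs] at this
      rw [← sq, ← sq_abs]; gcongr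
    simp only [dotProduct, Fin.sum_univ_three]
    linarith [h' 0, h' 1, h' 2]
  have h3 : (y ⬝ᵥ (J *ᵥ y)) * ‖x‖ ^ 2 ≤ x ⬝ᵥ (J *ᵥ x) := by
    calc _ ≤ (‖x‖⁻¹ * (‖x‖⁻¹ * (x ⬝ᵥ (J *ᵥ x)))) * ‖x‖ ^ 2 := by gcongr
      _ = _ := by field_simp
  nlinarith

/-- Scalar comparison lemma. -/
lemma comparison {W W' g : ℝ → ℝ} {b C : ℝ} (hb : 0 < b) (hC : 0 ≤ C)
    (hW0 : ∀ t, 0 ≤ t → 0 ≤ W t)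
    (hW : ∀ t, 0 ≤ t → HasDerivAt W (W' t) t) (hg0 : ∀ t, 0 ≤ g t)
    (hg : IntegrableOn g (Set.Ici (0 : ℝ)))
    (hle : ∀ t, 0 ≤ t → W' t ≤ -b * W t + C * g t) :
    Tendsto W atTop (nhds 0) := by
  have key : ∀ s t, 0 ≤ s → s ≤ t →
      W t ≤ Real.exp (-b * (t - s)) * W s + C * ∫ u in Set.Ioi s, g u := by
    intro s t hs hst
    have hder : ∀ x, 0 ≤ x → HasDerivAt (fun u => Real.exp (b * u) * W u)
        (Real.exp (b * x) * b * W x + Real.exp (b * x) * W' x) x := by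
      intro x hx
      have h1 : HasDerivAt (fun u => Real.exp (b * u)) (Real.exp (b * x) * b) x := by
        simpa using ((hasDerivAt_id x).const_mul b).exp
      exact h1.mul (hW x hx)
    have hgi : IntegrableOn g (Set.Icc s t) := hg.mono_set fun x hx => hs.trans hx.1
    have h := intervalIntegral.sub_le_integral_of_hasDeriv_right_of_le
      (g := fun u => Real.exp (b * u) * W u)
      (g' := fun x => Real.exp (b * x) * b * W x + Real.exp (b * x) * W' x)
      (φ := fun u => (Real.exp (b * t) * C) * g u) hst
      (fun x hx => (hder x (hs.trans hx.1)).continuousAt.continuousWithinAt)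
      (fun x hx => (hder x (hs.trans hx.1.le)).hasDerivWithinAt)
      (hgi.const_mul _)
      (fun x hx => by
        have h1 := hle x (hs.trans hx.1.le)
        have h2 : Real.exp (b * x) ≤ Real.exp (b * t) := by
          apply Real.exp_le_exp.mpr; nlinarith [hx.2]
        have h3 := mul_le_mul_of_nonneg_left h1 (Real.exp_pos (b * x)).le
        have h4 := mul_le_mul_of_nonneg_right h2 (mul_nonneg hC (hg0 x))
        nlinarith)
    rw [intervalIntegral.integral_const_mul, intervalIntegral.integral_of_le hst] at h
    have h5 : ∫ u in Set.Ioc s t, g u ≤ ∫ u in Set.Ioi s, g u :=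
      setIntegral_mono_set (hg.mono_set fun x hx => hs.trans (le_of_lt hx))
        (Eventually.of_forall fun x => hg0 x)
        (Eventually.of_forall fun x (hx : x ∈ Set.Ioc s t) => hx.1)
    have h6 := mul_le_mul_of_nonneg_left h5 (mul_nonneg (Real.exp_pos (b * t)).le hC)
    have h7 : Real.exp (-b * (t - s)) * Real.exp (b * t) = Real.exp (b * s) := by
      rw [← Real.exp_add]; ring_nf
    have h8 := Real.exp_pos (b * t)
    rw [← mul_le_mul_iff_right₀ h8]
    have h9 : Real.exp (b * t) * (Real.exp (-b * (t - s)) * W s) = Real.exp (b * s) * W s := by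
      rw [← h7]; ring
    rw [mul_add, h9]
    linarith
  have htail : Tendsto (fun s : ℝ => ∫ u in Set.Ioi s, g u) atTop (nhds 0) := by
    have h1 := intervalIntegral_tendsto_integral_Ioi (0:ℝ) (hg.mono_set Set.Ioi_subset_Ici_self)
      tendsto_id
    have h2 := (tendsto_const_nhds (x := ∫ u in Set.Ioi (0:ℝ), g u)).sub h1
    rw [sub_self] at h2
    refine h2.congr' ?_
    filter_upwards [eventually_ge_atTop 0] with s hs
    have := intervalIntegral.integral_interval_add_Ioi
      (f := g) (a := 0) (b := s) (μ := volume) (hg.mono_set Set.Ioi_subset_Ici_self)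
      (hg.mono_set fun x hx => hs.trans (le_of_lt hx))
    simp only [id]
    linarith
  rw [Metric.tendsto_atTop]
  intro δ hδ
  have ht2 : Tendsto (fun s : ℝ => C * ∫ u in Set.Ioi s, g u) atTop (nhds 0) := by
    simpa using htail.const_mul C
  obtain ⟨s, hs0, hs⟩ := ((eventually_ge_atTop 0).and
    (ht2.eventually (gt_mem_nhds (half_pos hδ)))).exists
  have hexp : Tendsto (fun t => Real.exp (-b * (t - s)) * W s) atTop (nhds 0) := by
    have : Tendsto (fun t : ℝ => -b * (t - s)) atTop atBot :=
      (tendsto_atTop_add_const_right _ (-s) tendsto_id).const_mul_atTop_of_neg (by linarith)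
    simpa using (Real.tendsto_exp_atBot.comp this).mul_const (W s)
  obtain ⟨N, hN⟩ := eventually_atTop.mp (hexp.eventually (gt_mem_nhds (half_pos hδ)))
  refine ⟨max N s, fun t ht => ?_⟩
  have h1 := hN t ((le_max_left _ _).trans ht)
  have hst := (le_max_right _ _).trans ht
  have h2 := key s t hs0 hst
  have h3 := hW0 t (hs0.trans hst)
  rw [Real.dist_eq, sub_zero, abs_of_nonneg h3]
  linarith

/-- The scalar inequality behind the strict Lyapunov estimate. -/
lemma scalar_decay {kp kd M ε L A B b c n p f g X Y Z T Q P : ℝ}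
    (hkp : 0 < kp) (hc : 0 < c) (hn : 0 ≤ n) (hf : 0 ≤ f) (hb : 0 ≤ b)
    (hg : 0 ≤ g) (hgM : g ≤ M)
    (hA : A = 2 + L + kd ^ 2 / (2 * kp)) (hB : B = (1 + L) / 4 + c * L / 2)
    (hL : 0 ≤ L)
    (hcA : c * A ≤ kd / 2) (hbB : b * B ≤ kd / 2) (hbf : b * (kp + c) ≤ c * kp * ε / 2)
    (hp : ε * f ≤ p) (hp2 : p ≤ 2 * f)
    (hX : |X| ≤ 1 / 2 * (2 * n + g ^ 2) + 1 / 2 * (L * n))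
    (hY : |Y| ≤ 1 / 2 * (L * n) + 1 / 2 * n)
    (hZ : kd * Z ≤ kp / 2 * p + kd ^ 2 / (2 * kp) * n)
    (hT : |T| ≤ 2 * g) (hQ : Q ≤ (1 + L) / 2 * n) (hP : |P| ≤ 1 / 2 * p + 1 / 2 * (L * n)) :
    -kd * n - kp / 2 * T - c * (X + (Y + (kp * p - kd * Z)))
      ≤ -b * (kp * f + 1 / 2 * Q - c * P) + (kp + c * M / 2) * g := by
  have hX' := (abs_le.mp hX).1
  have hY' := (abs_le.mp hY).1
  have hT' := (abs_le.mp hT).1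
  have hP' := (abs_le.mp hP).1
  have hgg : g ^ 2 ≤ M * g := by nlinarith
  have s1 : -(X + (Y + (kp * p - kd * Z))) ≤ A * n + M * g / 2 - kp / 2 * (ε * f) := by
    have : kp / 2 * (ε * f) ≤ kp / 2 * p := by gcongr
    rw [hA]; linarith
  have s2 := mul_le_mul_of_nonneg_left s1 hc.le
  have s3 := mul_le_mul_of_nonneg_right hcA hn
  have s4 : kp * f + 1 / 2 * Q - c * P ≤ (kp + c) * f + B * n := by
    have : c * (-P) ≤ c * (f + 1 / 2 * (L * n)) := by gcongr; linarith
    rw [hB]; linarith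
  have s5 := mul_le_mul_of_nonneg_left s4 hb
  have s6 := mul_le_mul_of_nonneg_right hbB hn
  have s7 := mul_le_mul_of_nonneg_right hbf hf
  have s8 : -(kp / 2 * T) ≤ kp * g := by
    have := mul_le_mul_of_nonneg_left hT' hkp.le
    linarith
  linarith

lemma hasDerivAt_dot {x y x' y' : ℝ → V3} {t : ℝ}
    (hx : ∀ i, HasDerivAt (fun s => x s i) (x' t i) t)
    (hy : ∀ i, HasDerivAt (fun s => y s i) (y' t i) t) :
    HasDerivAt (fun s => x s ⬝ᵥ y s) (x' t ⬝ᵥ y t + x t ⬝ᵥ y' t) t := by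
  have h := HasDerivAt.fun_sum (u := Finset.univ) fun i _ => (hx i).fun_mul (hy i)
  simpa [dotProduct, Finset.sum_add_distrib] using h

lemma hasDerivAt_mulVec (J : M3) {x x' : ℝ → V3} {t : ℝ}
    (hx : ∀ i, HasDerivAt (fun s => x s i) (x' t i) t) (i : Fin 3) :
    HasDerivAt (fun s => (J *ᵥ x s) i) ((J *ᵥ x' t) i) t := by
  have h := HasDerivAt.fun_sum (u := Finset.univ) fun j _ => (hx j).const_mul (J i j)
  simpa [Matrix.mulVec, dotProduct] using h

lemma hasDerivAt_err {R Rg : ℝ → M3} {R' Rg' : M3} {t : ℝ}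
    (hR : ∀ i j, HasDerivAt (fun s => R s i j) (R' i j) t)
    (hRg : ∀ i j, HasDerivAt (fun s => Rg s i j) (Rg' i j) t) (i j : Fin 3) :
    HasDerivAt (fun s => ((R s)ᵀ * Rg s) i j) ((R'ᵀ * Rg t + (R t)ᵀ * Rg') i j) t := by
  have h := HasDerivAt.fun_sum (u := Finset.univ) fun k _ => (hR k i).fun_mul (hRg k j)
  simpa [Matrix.mul_apply, Finset.sum_add_distrib] using h

lemma hasDerivAt_phi {E : ℝ → M3} {E' : M3} {t : ℝ}
    (hE : ∀ i j, HasDerivAt (fun s => E s i j) (E' i j) t) :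
    HasDerivAt (fun s => phi (E s)) (-(1 / 2) * E'.trace) t := by
  have h := (((hE 0 0).fun_add (hE 1 1)).fun_add (hE 2 2)).const_mul (-(1 / 2) : ℝ)
  have h2 := h.const_add (3 / 2)
  have e1 : (fun s => phi (E s))
      = fun x => 3 / 2 + -(1 / 2) * (E x 0 0 + E x 1 1 + E x 2 2) := by
    funext s
    simp [phi, Matrix.trace, Fin.sum_univ_three]; ring
  have e2 : E'.trace = E' 0 0 + E' 1 1 + E' 2 2 := by
    simp [Matrix.trace, Fin.sum_univ_three]
  rw [e1, e2]
  exact h2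

lemma hasDerivAt_vee {E : ℝ → M3} {E' : M3} {t : ℝ}
    (hE : ∀ i j, HasDerivAt (fun s => E s i j) (E' i j) t) (i : Fin 3) :
    HasDerivAt (fun s => vee (sk (E s)) i) (vee (sk E') i) t := by
  have h := fun i j => ((hE i j).fun_sub (hE j i)).const_mul (1 / 2 : ℝ)
  fin_cases i
  · simpa [vee, sk] using h 2 1
  · simpa [vee, sk] using h 0 2
  · simpa [vee, sk] using h 1 0

lemma fsq_sub {R S : M3} (hR : SO3 R) (hS : SO3 S) : fsq (R - S) = 4 * phi (Rᵀ * S) := by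
  have h1 : fsq R = 3 := by rw [fsq_eq_trace, hR.1]; simp
  have h2 : fsq S = 3 := by rw [fsq_eq_trace, hS.1]; simp
  have h3 : fsq (R - S) = fsq R + fsq S - 2 * (Rᵀ * S).trace := by
    simp only [fsq, Matrix.trace, Matrix.mul_apply, Matrix.diag, Fin.sum_univ_three,
      Matrix.transpose_apply, Matrix.sub_apply]
    ring
  rw [h3, h1, h2]
  simp [phi, Matrix.trace_sub]; ring

/-- Convergence of the attitude under summable reference variation: if the
reference derivative is bounded and integrable, `R_g(t) → R_d ∈ SO(3)`, and the
error stays away from the antipodal set (`φ(RᵀR_g) ≤ 2 − ε`), then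
`R(t) → R_d` and `ω(t) → 0`. -/
theorem attitude_convergence_summable_reference
    (J : M3) (kp kd M ε : ℝ)
    (hJ : J.PosDef) (hkp : 0 < kp) (hkd : 0 < kd)
    (hε₀ : 0 < ε) (hε₂ : ε < 2)
    (R Rg Rg' : ℝ → M3) (ω ω' : ℝ → V3) (Rd : M3) (hRd : SO3 Rd)
    (hRSO : ∀ t ∈ Set.Ici (0 : ℝ), SO3 (R t))
    (hRgSO : ∀ t ∈ Set.Ici (0 : ℝ), SO3 (Rg t))
    (hR : ∀ t ∈ Set.Ici (0 : ℝ), ∀ i j,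
      HasDerivAt (fun s => R s i j) ((R t * hat (ω t)) i j) t)
    (hω : ∀ t ∈ Set.Ici (0 : ℝ), ∀ i, HasDerivAt (fun s => ω s i) (ω' t i) t)
    (hdyn : ∀ t ∈ Set.Ici (0 : ℝ), J.mulVec (ω' t) =
      crossProduct (J.mulVec (ω t)) (ω t) + tauPD kp kd (R t) (Rg t) (ω t))
    (hRg : ∀ t ∈ Set.Ici (0 : ℝ), ∀ i j,
      HasDerivAt (fun s => Rg s i j) (Rg' t i j) t)
    (hM : ∀ t ∈ Set.Ici (0 : ℝ), fnorm (Rg' t) ≤ M)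
    (hsum : IntegrableOn (fun t => fnorm (Rg' t)) (Set.Ici (0 : ℝ)))
    (hRgconv : Tendsto Rg atTop (nhds Rd))
    (hphi : ∀ t ∈ Set.Ici (0 : ℝ), phi ((R t)ᵀ * Rg t) ≤ 2 - ε) :
    Tendsto R atTop (nhds Rd) ∧ Tendsto ω atTop (nhds 0) := by
  obtain ⟨m, hm, hlow⟩ := posDef_lower hJ
  set L : ℝ := fsq J + 1 with hLdef
  have hL : 0 < L := by have : 0 ≤ fsq J := by unfold fsq; positivity
                        linarith
  obtain ⟨A, hA⟩ : ∃ A : ℝ, A = 2 + L + kd ^ 2 / (2 * kp) := ⟨_, rfl⟩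
  have hA0 : 0 < A := by rw [hA]; positivity
  obtain ⟨c, hc, hcA, hckp, hcL⟩ : ∃ c : ℝ, 0 < c ∧ c * A ≤ kd / 2 ∧ c ≤ kp / 2 ∧
      c * L ≤ m / 2 := by
    refine ⟨min (kd / 2 / A) (min (kp / 2) (m / 2 / L)), by positivity, ?_, ?_, ?_⟩
    · rw [← le_div_iff₀ hA0]; exact min_le_left _ _
    · exact (min_le_right _ _).trans (min_le_left _ _)
    · rw [← le_div_iff₀ hL]; exact (min_le_right _ _).trans (min_le_right _ _)
  obtain ⟨B, hB⟩ : ∃ B : ℝ, B = (1 + L) / 4 + c * L / 2 := ⟨_, rfl⟩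
  have hB0 : 0 < B := by rw [hB]; positivity
  obtain ⟨b, hb, hbB, hbf⟩ : ∃ b : ℝ, 0 < b ∧ b * B ≤ kd / 2 ∧
      b * (kp + c) ≤ c * kp * ε / 2 := by
    refine ⟨min (kd / 2 / B) (c * kp * ε / 2 / (kp + c)), by positivity, ?_, ?_⟩
    · rw [← le_div_iff₀ hB0]; exact min_le_left _ _
    · rw [← le_div_iff₀ (by positivity)]; exact min_le_right _ _
  have hM0 : 0 ≤ M := (fnorm_nonneg _).trans (hM 0 (by simp))
  -- the error matrix, the error vector and basic bounds
  set E : ℝ → M3 := fun t => (R t)ᵀ * Rg t with hE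
  set e : ℝ → V3 := fun t => vee (sk (E t)) with he
  set D : ℝ → M3 := fun t => dE (R t) (Rg t) (Rg' t) (ω t) with hD
  have hsq : ∀ t, 0 ≤ t → e t ⬝ᵥ e t = phi (E t) * (2 - phi (E t)) := fun t ht =>
    vee_sk_sq ((hRSO t ht).err (hRgSO t ht))
  have hphi' : ∀ t, 0 ≤ t → phi (E t) ≤ 2 - ε := fun t ht => hphi t ht
  have hphi0 : ∀ t, 0 ≤ t → 0 ≤ phi (E t) := by
    intro t ht
    have h1 := hsq t ht
    have h2 := dot_self_nonneg (e t)
    have h3 := hphi' t ht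
    by_contra h
    push Not at h
    nlinarith
  have hp2 : ∀ t, 0 ≤ t → e t ⬝ᵥ e t ≤ 2 * phi (E t) := by
    intro t ht
    have h1 := hsq t ht
    nlinarith [sq_nonneg (phi (E t))]
  have hpε : ∀ t, 0 ≤ t → ε * phi (E t) ≤ e t ⬝ᵥ e t := by
    intro t ht
    have h1 := hsq t ht
    nlinarith [hphi0 t ht, hphi' t ht]
  have hp1 : ∀ t, 0 ≤ t → e t ⬝ᵥ e t ≤ 1 := by
    intro t ht
    have h1 := hsq t ht
    nlinarith [sq_nonneg (phi (E t) - 1)]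
  have hP : ∀ t, |e t ⬝ᵥ (J *ᵥ ω t)| ≤
      1 / 2 * (e t ⬝ᵥ e t) + 1 / 2 * (L * (ω t ⬝ᵥ ω t)) := by
    intro t
    have h1 := dot_le (e t) (J *ᵥ ω t) 1 one_pos
    have h2 := mulVec_bound J (ω t)
    rw [← hLdef] at h2
    linarith
  -- the Lyapunov function
  set W : ℝ → ℝ := fun t => kp * phi (E t) + 1 / 2 * (ω t ⬝ᵥ (J *ᵥ ω t))
    - c * (e t ⬝ᵥ (J *ᵥ ω t)) with hWdef
  have hWlow : ∀ t, 0 ≤ t → kp / 2 * phi (E t) + m / 4 * (ω t ⬝ᵥ ω t) ≤ W t := by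
    intro t ht
    have h1 := hlow (ω t)
    have h2 := (abs_le.mp (hP t)).2
    have h3 := hp2 t ht
    have h4 : c * (e t ⬝ᵥ (J *ᵥ ω t)) ≤ c * (phi (E t) + 1 / 2 * (L * (ω t ⬝ᵥ ω t))) := by
      gcongr; linarith
    have h5 := mul_le_mul_of_nonneg_right hckp (hphi0 t ht)
    have h6 := mul_le_mul_of_nonneg_right hcL (dot_self_nonneg (ω t))
    simp only [hWdef]
    nlinarith
  have hW0 : ∀ t, 0 ≤ t → 0 ≤ W t := by
    intro t ht
    have h1 := hWlow t ht
    have h2 := dot_self_nonneg (ω t)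
    have h3 := hphi0 t ht
    have : 0 ≤ kp / 2 * phi (E t) + m / 4 * (ω t ⬝ᵥ ω t) := by positivity
    linarith
  have hJsymm : ∀ x y : V3, x ⬝ᵥ (J *ᵥ y) = y ⬝ᵥ (J *ᵥ x) := by
    intro x y
    have h1 : Jᵀ = J := by simpa [Matrix.IsHermitian] using hJ.isHermitian
    rw [Matrix.dotProduct_mulVec, dotProduct_comm, ← Matrix.mulVec_transpose, h1]
  have hWder : ∀ t, 0 ≤ t → HasDerivAt W (-kd * (ω t ⬝ᵥ ω t)
      - kp / 2 * ((R t)ᵀ * Rg' t).trace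
      - c * (vee (sk (D t)) ⬝ᵥ (J *ᵥ ω t) + (e t ⬝ᵥ crossProduct (J *ᵥ ω t) (ω t)
        + (kp * (e t ⬝ᵥ e t) - kd * (e t ⬝ᵥ ω t))))) t := by
    intro t ht
    have hEd : ∀ i j, HasDerivAt (fun s => E s i j) (D t i j) t :=
      hasDerivAt_err (hR t ht) (hRg t ht)
    have hJω := hasDerivAt_mulVec J (x := ω) (x' := ω') (hω t ht)
    have d1 := (hasDerivAt_phi hEd).const_mul kp
    have d2 := (hasDerivAt_dot (x := ω) (x' := ω') (y := fun s => J *ᵥ ω s)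
      (y' := fun s => J *ᵥ ω' s) (hω t ht) hJω).const_mul (1 / 2 : ℝ)
    have d3 := (hasDerivAt_dot (x := e) (x' := fun s => vee (sk (D s))) (y := fun s => J *ᵥ ω s)
      (y' := fun s => J *ᵥ ω' s) (hasDerivAt_vee hEd) hJω).const_mul c
    refine ((d1.fun_add d2).fun_sub d3).congr_deriv ?_
    have hdt : J *ᵥ ω' t = crossProduct (J *ᵥ ω t) (ω t) + (kp • e t - kd • ω t) := hdyn t ht
    have t1 : (D t).trace = 2 * (ω t ⬝ᵥ e t) + ((R t)ᵀ * Rg' t).trace := by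
      simp only [hD]
      rw [dE_eq, Matrix.trace_add, trace_hat]
    rw [hJsymm (ω' t) (ω t), hdt, t1]
    simp only [dotProduct_add, dotProduct_sub, dotProduct_smul, smul_eq_mul, triple_zero]
    ring
  have hWlim : Tendsto W atTop (nhds 0) := by
    refine comparison (g := fun t => fnorm (Rg' t)) (C := kp + c * M / 2) hb (by positivity) hW0
      hWder (fun t => fnorm_nonneg _) hsum ?_
    intro t ht
    have hn := dot_self_nonneg (ω t)
    have hmv := mulVec_bound J (ω t)
    rw [← hLdef] at hmv
    refine scalar_decay (ε := ε) (L := L) hkp hc hn (hphi0 t ht) hb.le (fnorm_nonneg _) (hM t ht)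
      hA hB hL.le hcA hbB hbf (hpε t ht) (hp2 t ht) ?_ ?_ ?_ ?_ ?_ (hP t)
    · have h1 := dot_le (vee (sk (D t))) (J *ᵥ ω t) 1 one_pos
      have h2 : vee (sk (D t)) ⬝ᵥ vee (sk (D t)) ≤ _ := vee_dE_bound (hRSO t ht) (hRgSO t ht)
      linarith
    · rw [triple]
      have h1 := dot_le (J *ᵥ ω t) (crossProduct (ω t) (e t)) 1 one_pos
      have h2 := cross_bound (ω t) (e t)
      have h3 := mul_le_mul_of_nonneg_left (hp1 t ht) hn
      linarith
    · have h1 := (abs_le.mp (dot_le (e t) (ω t) (kp / kd) (by positivity))).2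
      have h2 := mul_le_mul_of_nonneg_left h1 hkd.le
      refine h2.trans (le_of_eq ?_)
      field_simp
    · refine (trace_bound _).trans_eq ?_
      have : fnorm ((R t)ᵀ * Rg' t) = fnorm (Rg' t) := by
        have h1 := fsq_transpose_mul (hRSO t ht) (Rg' t)
        unfold fsq at h1
        unfold fnorm
        rw [h1]
      rw [this]
    · have h1 := (abs_le.mp (dot_le (ω t) (J *ᵥ ω t) 1 one_pos)).2
      linarith
  -- conclusions
  have hsqrt : ∀ (f : ℝ → ℝ) (K : ℝ), (∀ t, 0 ≤ t → f t ^ 2 ≤ K * W t) →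
      Tendsto f atTop (nhds 0) := by
    intro f K hf
    have h1 : Tendsto (fun t => K * W t) atTop (nhds 0) := by simpa using hWlim.const_mul K
    have h2 : Tendsto (fun t => f t ^ 2) atTop (nhds 0) := by
      refine squeeze_zero' (Eventually.of_forall fun t => sq_nonneg _) ?_ h1
      filter_upwards [eventually_ge_atTop 0] with t ht using hf t ht
    have h3 := h2.sqrt
    simp only [Real.sqrt_sq_eq_abs, Real.sqrt_zero] at h3
    exact (tendsto_zero_iff_abs_tendsto_zero _).mpr h3
  constructor
  · have hdiff : Tendsto (fun t => R t - Rg t) atTop (nhds 0) := by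
      refine tendsto_pi_nhds.mpr fun i => tendsto_pi_nhds.mpr fun j => ?_
      refine hsqrt (fun t => (R t - Rg t) i j) (8 / kp) fun t ht => ?_
      have h1 : (R t - Rg t) i j ^ 2 ≤ fsq (R t - Rg t) := by
        unfold fsq
        calc _ ≤ ∑ j, (R t - Rg t) i j ^ 2 :=
              Finset.single_le_sum (f := fun j => (R t - Rg t) i j ^ 2)
                (fun _ _ => sq_nonneg _) (Finset.mem_univ j)
          _ ≤ _ := Finset.single_le_sum (f := fun i => ∑ j, (R t - Rg t) i j ^ 2)
                (fun _ _ => Finset.sum_nonneg fun _ _ => sq_nonneg _) (Finset.mem_univ i)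
      have h2 := fsq_sub (hRSO t ht) (hRgSO t ht)
      have h3 := hWlow t ht
      have h4 : 0 ≤ m / 4 * (ω t ⬝ᵥ ω t) := by have := dot_self_nonneg (ω t); positivity
      have h5 : 8 / kp * (kp / 2 * phi (E t)) ≤ 8 / kp * W t := by gcongr; linarith
      have h6 : 8 / kp * (kp / 2 * phi (E t)) = 4 * phi (E t) := by field_simp; ring
      have h7 : fsq (R t - Rg t) = 4 * phi (E t) := h2
      linarith
    simpa using hdiff.add hRgconv
  · refine tendsto_pi_nhds.mpr fun i => ?_
    refine hsqrt (fun t => ω t i) (4 / m) fun t ht => ?_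
    have h1 : ω t i ^ 2 ≤ ω t ⬝ᵥ ω t := by
      rw [sq]
      exact Finset.single_le_sum (f := fun i => ω t i * ω t i)
        (fun _ _ => mul_self_nonneg _) (Finset.mem_univ i)
    have h3 := hWlow t ht
    have h4 : 0 ≤ kp / 2 * phi (E t) := by have := hphi0 t ht; positivity
    have h5 : 4 / m * (m / 4 * (ω t ⬝ᵥ ω t)) ≤ 4 / m * W t := by gcongr; linarith
    have h6 : 4 / m * (m / 4 * (ω t ⬝ᵥ ω t)) = ω t ⬝ᵥ ω t := by field_simp
    linarith
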